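/- Let ξ be a rational number with ξ ≠ 0, ξ ≠ 1 and ξ ≠ −1, and let α be a nonzero rational number. Let A and B be cochain complexes of ℚ[X]-modules such that for every integer k: if α·k is an integer then H^k(A) and H^k(B) are finite-dimensional over ℚ and X − ξ^{α·k} acts nilpotently on each of them, and if α·k is not an integer then H^k(A) = H^k(B) = 0. Let u : A → B be a morphism of cochain complexes of ℚ[X]-modules. Then there exist isomorphisms a : A ≅ H(A) and b : B ≅ H(B) in the derived category of ℚ[X]-modules, where H(A) and H(B) denote the cohomology complexes equipped with zero differentials, such that b composed with (the image in the derived category of) u equals (the image in the derived category of) the induced map H(u) : H(A) → H(B) composed with a. -/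

import Mathlib

/-!
Cohomology modules in adjacent degrees have distinct weights: if `α k` and `α (k + 1)` are both
integers, then `ξ ^ (α (k + 1)) ≠ ξ ^ (α k)`, because `ξ` is not `0` or a root of unity. By Bézout
some polynomial `c` kills `H^{k+1}(A)` and acts as the identity on `H^k(B)`
(`exists_separating`), which forces `Ext¹(H^{k+1}(A), H^k(B)) = 0`
(`ShortResolution.exists_extension`).

Since `ℚ[X]` is a principal ideal domain, each `H^k(A)` has a resolution
`0 ⟶ K k ⟶ F k ⟶ H^k(A) ⟶ 0` by projectives. Their total complex `P(A)`, with degree-`k` term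
`F k ⊞ K (k + 1)`, has cohomology `H(A)`, and every graded map from `H(A)` to the cohomology of a
complex `T` is realized by a chain map `P(A) ⟶ T` (`ShortResolution.exists_hom`). Realizing the
identity for `T = A` and `T = H(A)` gives quasi-isomorphisms `A ⟵ P(A) ⟶ H(A)`, hence the
isomorphism `a`; likewise `b`. Realizing `H(u)` for `T = P(B)` gives `φ : P(A) ⟶ P(B)`.

When the `Ext¹` groups from `H^{k+1}(A)` to `H^k(T)` vanish, a chain map `P(A) ⟶ T` is determined
up to homotopy by its effect on cohomology (`ShortResolution.homotopy`). So the two squares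
expressing the compatibility of `φ` with `u` and with `H(u)` commute up to homotopy, hence in the
derived category, where they combine to the required square (`formality_square`).
-/

open CategoryTheory Polynomial

/-- The cochain complex whose degree-`k` term is the `k`-th cohomology of `A`,
with zero differentials. -/
noncomputable def cohomologyComplex
    (A : CochainComplex (ModuleCat (Polynomial ℚ)) ℤ) :
    CochainComplex (ModuleCat (Polynomial ℚ)) ℤ where
  X k := A.homology k
  d _ _ := 0

/-- The morphism of cohomology complexes induced degreewise by a chain map. -/
noncomputable def cohomologyComplexMap
    {A B : CochainComplex (ModuleCat (Polynomial ℚ)) ℤ} (u : A ⟶ B) :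
    cohomologyComplex A ⟶ cohomologyComplex B where
  f k := HomologicalComplex.homologyMap u k
  comm' := by intros; simp [cohomologyComplex]

/-! ### Complexes of short resolutions -/

/-- A projective resolution `0 ⟶ K ⟶ F ⟶ M ⟶ 0` of length one of the object `M`. -/
structure ShortResolution {C : Type*} [Category* C] [Abelian C] (M : C) where
  K : C
  F : C
  i : K ⟶ F
  p : F ⟶ M
  w : i ≫ p = 0
  shortExact : (ShortComplex.mk i p w).ShortExact
  projK : Projective K
  projF : Projective F

namespace ShortResolution

open Limits

attribute [instance] projK projF

section

variable {C : Type*} [Category* C] [Abelian C]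

instance {M : C} (R : ShortResolution M) : Mono R.i := R.shortExact.mono_f

instance {M : C} (R : ShortResolution M) : Epi R.p := R.shortExact.epi_g

/-- If `c` kills `M` and acts as the identity
on `N`, then every `K ⟶ N` extends to `F`, that is, `Ext¹(M, N) = 0`. Indeed, `c` factors
as `F ⟶ K ⟶ F`, and `F ⟶ K` followed by the given map is an extension. -/
lemma exists_extension {A : Type*} [CommRing A] [Linear A C] {M N : C} (R : ShortResolution M)
    (c : A) (hM : c • 𝟙 M = 0) (hN : c • 𝟙 N = 𝟙 N) (g : R.K ⟶ N) :
    ∃ h : R.F ⟶ N, R.i ≫ h = g := by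
  have hz : (c • 𝟙 R.F) ≫ R.p = 0 := by
    rw [Linear.smul_comp, Category.id_comp, ← Category.comp_id R.p, ← Linear.comp_smul, hM,
      Limits.comp_zero]
  let l : R.F ⟶ R.K := R.shortExact.exact.lift (c • 𝟙 R.F) hz
  have hl : l ≫ R.i = c • 𝟙 R.F := R.shortExact.exact.lift_f (c • 𝟙 R.F) hz
  have hil : R.i ≫ l = c • 𝟙 R.K := by
    rw [← cancel_mono R.i, Category.assoc, hl]
    simp
  refine ⟨l ≫ g, ?_⟩
  rw [← Category.assoc, hil, Linear.smul_comp, Category.id_comp, ← Category.comp_id g,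
    ← Linear.comp_smul, hN]

variable {H : ℤ → C} (R : ∀ k, ShortResolution (H k))

/-- The total complex of a family of resolutions `K k ⟶ F k` of the objects `H k`, the latter
being placed in degree `k`: its degree-`k` term is `F k ⊞ K (k + 1)`, and its
differential is the inclusion `K (k + 1) ⟶ F (k + 1)`. -/
noncomputable def total : CochainComplex C ℤ :=
  CochainComplex.of (fun k => (R k).F ⊞ (R (k + 1)).K)
    (fun k => biprod.snd ≫ (R (k + 1)).i ≫ biprod.inl) (by simp)

/-- The inclusion of the generators in degree `k`. -/
noncomputable def inF (k : ℤ) : (R k).F ⟶ (total R).X k :=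
  (biprod.inl : _ ⟶ (R k).F ⊞ (R (k + 1)).K)

/-- The inclusion of the relations of degree `k + 1`, placed in degree `k`. -/
noncomputable def inK (k : ℤ) : (R (k + 1)).K ⟶ (total R).X k :=
  (biprod.inr : _ ⟶ (R k).F ⊞ (R (k + 1)).K)

/-- The projection to the generators in degree `k`. -/
noncomputable def prF (k : ℤ) : (total R).X k ⟶ (R k).F :=
  (biprod.fst : (R k).F ⊞ (R (k + 1)).K ⟶ _)

/-- The projection from degree `k` to the relations of degree `k + 1`. -/
noncomputable def prK (k : ℤ) : (total R).X k ⟶ (R (k + 1)).K :=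
  (biprod.snd : (R k).F ⊞ (R (k + 1)).K ⟶ _)

/-- The map out of the degree-`k` term with given restrictions to generators and relations. -/
noncomputable def descX (k : ℤ) {T : C} (a : (R k).F ⟶ T) (b : (R (k + 1)).K ⟶ T) :
    (total R).X k ⟶ T :=
  (biprod.desc a b : (R k).F ⊞ (R (k + 1)).K ⟶ _)

@[simp]
lemma inF_descX (k : ℤ) {T : C} (a : (R k).F ⟶ T) (b : (R (k + 1)).K ⟶ T) :
    inF R k ≫ descX R k a b = a := biprod.inl_desc _ _

@[simp]
lemma inF_descX_assoc (k : ℤ) {T T' : C} (a : (R k).F ⟶ T) (b : (R (k + 1)).K ⟶ T)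
    (h : T ⟶ T') : inF R k ≫ descX R k a b ≫ h = a ≫ h := by
  rw [← Category.assoc, inF_descX]

@[simp]
lemma inK_descX (k : ℤ) {T : C} (a : (R k).F ⟶ T) (b : (R (k + 1)).K ⟶ T) :
    inK R k ≫ descX R k a b = b := biprod.inr_desc _ _

@[simp]
lemma inK_descX_assoc (k : ℤ) {T T' : C} (a : (R k).F ⟶ T) (b : (R (k + 1)).K ⟶ T)
    (h : T ⟶ T') : inK R k ≫ descX R k a b ≫ h = b ≫ h := by
  rw [← Category.assoc, inK_descX]

@[simp]
lemma inF_prF (k : ℤ) : inF R k ≫ prF R k = 𝟙 _ := biprod.inl_fst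

@[simp]
lemma inF_prF_assoc (k : ℤ) {T : C} (h : (R k).F ⟶ T) : inF R k ≫ prF R k ≫ h = h := by
  rw [← Category.assoc, inF_prF, Category.id_comp]

lemma total_id (k : ℤ) : prF R k ≫ inF R k + prK R k ≫ inK R k = 𝟙 _ := biprod.total

lemma hom_ext (k : ℤ) {T : C} {f g : (total R).X k ⟶ T} (h₁ : inF R k ≫ f = inF R k ≫ g)
    (h₂ : inK R k ≫ f = inK R k ≫ g) : f = g := biprod.hom_ext' _ _ h₁ h₂

lemma total_d (k : ℤ) : (total R).d k (k + 1) = prK R k ≫ (R (k + 1)).i ≫ inF R (k + 1) :=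
  CochainComplex.of_d (fun k => (R k).F ⊞ (R (k + 1)).K)
    (fun k => biprod.snd ≫ (R (k + 1)).i ≫ biprod.inl) k

@[simp]
lemma inF_d (k l : ℤ) : inF R k ≫ (total R).d k l = 0 := by
  by_cases h : k + 1 = l
  · subst h
    rw [total_d]
    exact biprod.inl_snd_assoc _ |>.trans Limits.zero_comp
  · rw [(total R).shape _ _ h, Limits.comp_zero]

@[simp]
lemma inF_d_assoc (k l : ℤ) {T : C} (h : (total R).X l ⟶ T) :
    inF R k ≫ (total R).d k l ≫ h = 0 := by
  rw [← Category.assoc, inF_d, Limits.zero_comp]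

@[simp]
lemma inK_d (k : ℤ) :
    inK R k ≫ (total R).d k (k + 1) = (R (k + 1)).i ≫ inF R (k + 1) := by
  rw [total_d]
  exact biprod.inr_snd_assoc _

@[simp]
lemma inK_d_assoc (k : ℤ) {T : C} (h : (total R).X (k + 1) ⟶ T) :
    inK R k ≫ (total R).d k (k + 1) ≫ h = (R (k + 1)).i ≫ inF R (k + 1) ≫ h := by
  rw [← Category.assoc, inK_d, Category.assoc]

instance (k : ℤ) : Mono (inF R k) :=
  mono_of_mono_fac (inF_prF R k)

/-- The generators in degree `k`, as cycles. -/
noncomputable def cyc (k : ℤ) : (R k).F ⟶ (total R).cycles k :=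
  (total R).liftCycles (inF R k) (k + 1) (by simp) (by simp)

@[simp]
lemma cyc_iCycles (k : ℤ) : cyc R k ≫ (total R).iCycles k = inF R k := by
  simp [cyc]

@[simp]
lemma cyc_iCycles_assoc (k : ℤ) {T : C} (h : (total R).X k ⟶ T) :
    cyc R k ≫ (total R).iCycles k ≫ h = inF R k ≫ h := by
  rw [← Category.assoc, cyc_iCycles]

/-- All cycles are combinations of generators, since the differential is injective on the
relations. -/
lemma iCycles_prF_cyc (k : ℤ) : (total R).iCycles k ≫ prF R k ≫ cyc R k = 𝟙 _ := by
  have h : (total R).iCycles k ≫ prK R k = 0 := by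
    rw [← cancel_mono ((R (k + 1)).i), ← cancel_mono (inF R (k + 1))]
    simpa [total_d] using (total R).iCycles_d k (k + 1)
  rw [← cancel_mono ((total R).iCycles k)]
  have := (total R).iCycles k ≫= total_id R k
  rw [Preadditive.comp_add, reassoc_of% h] at this
  simpa using this

/-- The cohomology of the total complex in degree `k` is `H k`, the class of a generator being
its image under the augmentation. -/
lemma exists_homologyIso (j : ℤ) : ∃ e : (total R).homology j ≅ H j,
    cyc R j ≫ (total R).homologyπ j ≫ e.hom = (R j).p := by
  obtain ⟨k, rfl⟩ : ∃ k, j = k + 1 := ⟨j - 1, by simp⟩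
  have h₁ : (total R).toCycles k (k + 1) ≫ (total R).iCycles (k + 1) ≫ prF R (k + 1) ≫
      (R (k + 1)).p = 0 := by
    apply hom_ext <;> simp [(R (k + 1)).w]
  have h₂ : (R (k + 1)).i ≫ cyc R (k + 1) ≫ (total R).homologyπ (k + 1) = 0 := by
    have : (R (k + 1)).i ≫ cyc R (k + 1) = inK R k ≫ (total R).toCycles k (k + 1) := by
      rw [← cancel_mono ((total R).iCycles _)]
      simp
    rw [reassoc_of% this, HomologicalComplex.toCycles_comp_homologyπ, Limits.comp_zero]
  obtain ⟨f, hf⟩ := CokernelCofork.IsColimit.desc'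
    ((total R).homologyIsCokernel k (k + 1) (by simp)) _ h₁
  obtain ⟨g, hg⟩ := CokernelCofork.IsColimit.desc' (R (k + 1)).shortExact.gIsCokernel _ h₂
  dsimp at hf hg
  have e₁ : f ≫ g = 𝟙 _ := by
    rw [← cancel_epi ((total R).homologyπ _), reassoc_of% hf]
    erw [hg]
    simpa using iCycles_prF_cyc R (k + 1) =≫ (total R).homologyπ (k + 1)
  have e₂ : g ≫ f = 𝟙 _ := by
    rw [← cancel_epi (R (k + 1)).p]
    erw [reassoc_of% hg]
    erw [hf]
    simp
  exact ⟨⟨f, g, e₁, e₂⟩, by erw [hf]; simp⟩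

/-- The identification of the cohomology of the total complex with `H`. -/
noncomputable def homologyIso (j : ℤ) : (total R).homology j ≅ H j :=
  (exists_homologyIso R j).choose

@[simp]
lemma cyc_homologyIso (j : ℤ) :
    cyc R j ≫ (total R).homologyπ j ≫ (homologyIso R j).hom = (R j).p :=
  (exists_homologyIso R j).choose_spec

@[simp]
lemma cyc_homologyIso_assoc (j : ℤ) {T : C} (h : H j ⟶ T) :
    cyc R j ≫ (total R).homologyπ j ≫ (homologyIso R j).hom ≫ h = (R j).p ≫ h := by
  rw [← cyc_homologyIso R j, Category.assoc, Category.assoc]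

instance (k : ℤ) : Epi (cyc R k ≫ (total R).homologyπ k) := by
  have : cyc R k ≫ (total R).homologyπ k = (R k).p ≫ (homologyIso R k).inv := by
    rw [← cancel_mono (homologyIso R k).hom]
    simp
  rw [this]
  infer_instance

/-- A map from a projective to the cycles that vanishes in cohomology factors through the
preceding differential. -/
lemma exists_lift_boundary (B : CochainComplex C ℤ) {P : C} [Projective P] (i j : ℤ)
    (hij : i + 1 = j) (z : P ⟶ B.cycles j) (hz : z ≫ B.homologyπ j = 0) :
    ∃ t : P ⟶ B.X i, t ≫ B.toCycles i j = z := by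
  have ex : (ShortComplex.mk _ _ (B.toCycles_comp_homologyπ i j)).Exact :=
    ShortComplex.exact_of_g_is_cokernel _ (B.homologyIsCokernel i j (by subst hij; simp))
  exact ⟨ex.liftFromProjective z hz, ex.liftFromProjective_comp z hz⟩

/-- Every family of maps on cohomology is realized by a chain map out of the total complex. -/
lemma exists_hom (B : CochainComplex C ℤ) (θ : ∀ k, H k ⟶ B.homology k) :
    ∃ f : total R ⟶ B, ∀ k,
      HomologicalComplex.homologyMap f k = (homologyIso R k).hom ≫ θ k := by
  let z (k : ℤ) : (R k).F ⟶ B.cycles k := Projective.factorThru ((R k).p ≫ θ k) (B.homologyπ k)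
  have hz (k : ℤ) : z k ≫ B.homologyπ k = (R k).p ≫ θ k := Projective.factorThru_comp _ _
  have ht (k : ℤ) : ∃ t : (R (k + 1)).K ⟶ B.X k,
      t ≫ B.toCycles k (k + 1) = (R (k + 1)).i ≫ z (k + 1) :=
    exists_lift_boundary B k (k + 1) rfl _ (by
      rw [Category.assoc, hz, ← Category.assoc, (R (k + 1)).w, Limits.zero_comp])
  choose t ht using ht
  let f : total R ⟶ B :=
    { f := fun k => descX R k (z k ≫ B.iCycles k) (t k)
      comm' := by
        rintro k _ rfl
        apply hom_ext
        · simp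
        · have := ht k =≫ B.iCycles (k + 1)
          simpa using this }
  refine ⟨f, fun k => ?_⟩
  have hf : cyc R k ≫ HomologicalComplex.cyclesMap f k = z k := by
    rw [← cancel_mono (B.iCycles k)]
    simp [f]
  rw [← cancel_epi (cyc R k ≫ (total R).homologyπ k)]
  simp [reassoc_of% hf, hz]

/-- If every map `K (k + 1) ⟶ H^k(B)` extends to `F (k + 1)`, a chain map from the total
complex to `B` that vanishes in cohomology is null-homotopic. -/
lemma homotopy_zero (B : CochainComplex C ℤ)
    (hext : ∀ k (g : (R (k + 1)).K ⟶ B.homology k), ∃ h, (R (k + 1)).i ≫ h = g)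
    (g : total R ⟶ B) (hg : ∀ k, HomologicalComplex.homologyMap g k = 0) :
    Nonempty (Homotopy g 0) := by
  -- a provisional homotopy on the generators
  have hs (k : ℤ) : ∃ s : (R (k + 1)).F ⟶ B.X k, s ≫ B.toCycles k (k + 1) =
      cyc R (k + 1) ≫ HomologicalComplex.cyclesMap g (k + 1) :=
    exists_lift_boundary B k (k + 1) rfl _ (by
      rw [Category.assoc, ← HomologicalComplex.homologyπ_naturality, hg, Limits.comp_zero,
        Limits.comp_zero])
  choose s hs using hs
  have hs' (k : ℤ) : s k ≫ B.d k (k + 1) = inF R (k + 1) ≫ g.f (k + 1) := by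
    simpa using hs k =≫ B.iCycles (k + 1)
  -- the class in `H^k(B)` of its defect on the relations is the obstruction
  have hr (k : ℤ) : ∃ r : (R (k + 1)).K ⟶ B.cycles k,
      r ≫ B.iCycles k = inK R k ≫ g.f k - (R (k + 1)).i ≫ s k :=
    ⟨B.liftCycles (inK R k ≫ g.f k - (R (k + 1)).i ≫ s k) (k + 1) (by simp) (by simp [hs']),
      by simp⟩
  choose r hr using hr
  have hh (k : ℤ) : ∃ h : (R (k + 1)).F ⟶ B.cycles k,
      (r k - (R (k + 1)).i ≫ h) ≫ B.homologyπ k = 0 := by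
    obtain ⟨h, hh⟩ := hext k (r k ≫ B.homologyπ k)
    exact ⟨Projective.factorThru h (B.homologyπ k), by simp [hh]⟩
  choose h hh using hh
  -- the extension `h` of that class corrects the provisional homotopy
  let s' (k : ℤ) : (R (k + 1)).F ⟶ B.X k := s k + h k ≫ B.iCycles k
  -- the corrected homotopy reindexed by arbitrary pairs of degrees, and its part on the relations
  have hF (j i : ℤ) : ∃ a : (R j).F ⟶ B.X i, ∀ hij : i + 1 = j,
      a = eqToHom (by rw [hij]) ≫ s' i := by
    by_cases hij : i + 1 = j
    · exact ⟨eqToHom (by rw [hij]) ≫ s' i, fun _ => rfl⟩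
    · exact ⟨0, fun h => absurd h hij⟩
  have hK (j i : ℤ) : ∃ t : (R (j + 1)).K ⟶ B.X i, i + 1 = j →
      t ≫ B.d i j = inK R j ≫ g.f j - (R (j + 1)).i ≫ s' j := by
    by_cases hij : i + 1 = j
    · obtain ⟨t, ht⟩ := exists_lift_boundary B i j hij _ (hh j)
      refine ⟨t, fun _ => ?_⟩
      have := ht =≫ B.iCycles j
      simp only [Category.assoc, HomologicalComplex.toCycles_i, Preadditive.sub_comp, hr] at this
      simp only [this, s', Preadditive.comp_add]
      abel
    · exact ⟨0, fun h => absurd h hij⟩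
  choose a ha using hF
  choose t ht using hK
  refine ⟨{ hom := fun j i => if i + 1 = j then descX R j (a j i) (t j i) else 0
            zero := fun j i hij => if_neg hij
            comm := fun j => ?_ }⟩
  obtain ⟨i, rfl⟩ : ∃ i, j = i + 1 := ⟨j - 1, by simp⟩
  rw [dNext_eq (i' := i + 1 + 1) _ (by simp), prevD_eq (j' := i) _ (by simp)]
  apply hom_ext
  · simp [ha _ _ rfl, s', hs']
  · simp [ha _ _ rfl, ht _ _ rfl]

/-- Under the same extension hypothesis, a chain map out of the total complex is determined up to
homotopy by its effect on cohomology. -/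
lemma homotopy (B : CochainComplex C ℤ)
    (hext : ∀ k (g : (R (k + 1)).K ⟶ B.homology k), ∃ h, (R (k + 1)).i ≫ h = g)
    (f g : total R ⟶ B)
    (hfg : ∀ k, HomologicalComplex.homologyMap f k = HomologicalComplex.homologyMap g k) :
    Nonempty (Homotopy f g) := by
  obtain ⟨h⟩ := homotopy_zero R B hext (f - g) (by simp [hfg])
  exact ⟨(Homotopy.equivSubZero).symm h⟩

end

end ShortResolution

/-! ### Modules over `ℚ[X]` -/

universe v

/-- Over a principal ideal domain, a finite module has a projective resolution of length one,
since submodules of finite free modules are free. -/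
lemma nonempty_shortResolution {A : Type} [CommRing A] [IsDomain A] [IsPrincipalIdealRing A]
    (M : ModuleCat.{v} A) [Module.Finite A M] : Nonempty (ShortResolution M) := by
  obtain ⟨n, f, hf⟩ := Module.Finite.exists_fin' A M
  let g : (ULift.{v} (Fin n) → A) →ₗ[A] M := f ∘ₗ (LinearMap.funLeft A A ULift.up)
  have hg : Function.Surjective g := hf.comp
    (LinearMap.funLeft_surjective_of_injective A A _ ULift.up_injective)
  obtain ⟨m, ⟨b⟩⟩ := Submodule.nonempty_basis_of_pid
    (Pi.basisFun A (ULift.{v} (Fin n))) (LinearMap.ker g)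
  have : Module.Projective A (LinearMap.ker g) := Module.Projective.of_basis b
  exact ⟨{
    K := ModuleCat.of A (LinearMap.ker g)
    F := ModuleCat.of A (ULift.{v} (Fin n) → A)
    i := ModuleCat.ofHom (LinearMap.ker g).subtype
    p := ModuleCat.ofHom g
    w := by ext x; exact x.2
    shortExact :=
      { exact := by
          rw [ShortComplex.moduleCat_exact_iff]
          exact fun x hx => ⟨⟨x, hx⟩, rfl⟩
        mono_f := (ModuleCat.mono_iff_injective _).2 Subtype.val_injective
        epi_g := (ModuleCat.epi_iff_surjective _).2 hg }
    projK := (IsProjective.iff_projective _).1 this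
    projF := (IsProjective.iff_projective _).1 inferInstance }⟩

/-- If the differentials of `K` vanish, its terms are its cohomology. -/
noncomputable def homologyIsoOfZero {C : Type*} [Category* C] [Abelian C]
    (K : CochainComplex C ℤ) (hK : ∀ i j, K.d i j = 0) (k : ℤ) : K.X k ≅ K.homology k :=
  (K.iCyclesIso k (k + 1) (by simp) (hK _ _)).symm ≪≫
    K.isoHomologyπ (k - 1) k (by simp) (hK _ _)

lemma homologyIsoOfZero_naturality {C : Type*} [Category* C] [Abelian C]
    {K L : CochainComplex C ℤ} (hK : ∀ i j, K.d i j = 0) (hL : ∀ i j, L.d i j = 0)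
    (f : K ⟶ L) (k : ℤ) :
    (homologyIsoOfZero K hK k).hom ≫ HomologicalComplex.homologyMap f k =
      f.f k ≫ (homologyIsoOfZero L hL k).hom := by
  rw [← cancel_epi (K.iCyclesIso k (k + 1) (by simp) (hK _ _)).hom]
  simp only [homologyIsoOfZero, Iso.trans_hom, Iso.symm_hom, Category.assoc,
    HomologicalComplex.isoHomologyπ_hom, HomologicalComplex.homologyπ_naturality,
    HomologicalComplex.iCyclesIso_hom, HomologicalComplex.iCyclesIso_hom_inv_id_assoc]
  rw [← HomologicalComplex.cyclesMap_i_assoc,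
    ← HomologicalComplex.iCyclesIso_hom L k (k + 1) (by simp) (hL _ _), Iso.hom_inv_id_assoc]

/-- The identification of the cohomology of the zero-differential complex `H(A)` with that
of `A`. -/
noncomputable def cohomologyComplexIso (A : CochainComplex (ModuleCat.{v} (Polynomial ℚ)) ℤ)
    (k : ℤ) : A.homology k ≅ (cohomologyComplex A).homology k :=
  homologyIsoOfZero (cohomologyComplex A) (fun _ _ => rfl) k

lemma cohomologyComplexIso_naturality {A B : CochainComplex (ModuleCat.{v} (Polynomial ℚ)) ℤ}
    (u : A ⟶ B) (k : ℤ) :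
    (cohomologyComplexIso A k).hom ≫
      HomologicalComplex.homologyMap (cohomologyComplexMap u) k =
    HomologicalComplex.homologyMap u k ≫ (cohomologyComplexIso B k).hom :=
  homologyIsoOfZero_naturality (fun _ _ => rfl) (fun _ _ => rfl) (cohomologyComplexMap u) k

/-- If `M` and `N` are killed by powers of `X - a` and `X - b` with `a ≠ b`, then some polynomial
kills `M` and acts as the identity on `N`: the first term of a Bézout relation
`r (X - a) ^ m + s (X - b) ^ n = 1`. -/
lemma exists_separating {M N : Type*} [AddCommGroup M] [Module ℚ[X] M] [AddCommGroup N]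
    [Module ℚ[X] N] {a b : ℚ} (hab : a ≠ b) {m n : ℕ}
    (hM : ∀ v : M, ((X - C a) ^ m : ℚ[X]) • v = 0)
    (hN : ∀ v : N, ((X - C b) ^ n : ℚ[X]) • v = 0) :
    ∃ c : ℚ[X], (∀ v : M, c • v = 0) ∧ ∀ v : N, c • v = v := by
  have hco : IsCoprime ((X - C a) ^ m : ℚ[X]) ((X - C b) ^ n) :=
    (isCoprime_X_sub_C_of_isUnit_sub (sub_ne_zero.2 hab).isUnit).pow
  obtain ⟨r, s, hrs⟩ := hco
  refine ⟨r * (X - C a) ^ m, fun v => by rw [mul_smul, hM, smul_zero], fun v => ?_⟩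
  have := congrArg (· • v) hrs
  simpa [add_smul, mul_smul, hN] using this

/-- Distinct weights in adjacent degrees: `ξ ^ (α (k + 1)) ≠ ξ ^ (α k)`. -/
lemma zpow_ne_zpow {ξ α : ℚ} (hξ0 : ξ ≠ 0) (hξ1 : ξ ≠ 1) (hξm1 : ξ ≠ -1) (hα : α ≠ 0)
    {k w w' : ℤ} (hw : (w : ℚ) = α * k) (hw' : (w' : ℚ) = α * ((k + 1 : ℤ) : ℚ)) :
    ξ ^ w' ≠ ξ ^ w := by
  intro h
  have hne : w' - w ≠ 0 := by
    intro h0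
    apply hα
    have : (w' : ℚ) = w := by exact_mod_cast sub_eq_zero.1 h0
    push_cast at hw'
    linarith
  have h1 : ξ ^ (w' - w) = 1 := by rw [zpow_sub₀ hξ0, h, div_self (zpow_ne_zero _ hξ0)]
  have h2 : |ξ| ≠ 1 := fun h => by
    rcases (abs_eq zero_le_one).1 h with h | h
    · exact hξ1 h
    · exact hξm1 h
  exact hne ((zpow_eq_one_iff_right₀ (abs_nonneg ξ) h2).1 (by rw [← abs_zpow, h1, abs_one]))

/-- Formality and its naturality for `u`, given that `H^{k+1}(A)` and `H^k(B)` are separated by a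
polynomial for every `k`. Both complexes are replaced by the total complexes of resolutions of
their cohomology; these map to `A` and `H(A)` (resp. `B` and `H(B)`), and `u` and `H(u)` are both
represented, up to homotopy, by one chain map `φ` between them. -/
lemma formality_square [HasDerivedCategory (ModuleCat.{v} (Polynomial ℚ))]
    (A B : CochainComplex (ModuleCat.{v} (Polynomial ℚ)) ℤ)
    (hA : ∀ k, Module.Finite ℚ[X] (A.homology k)) (hB : ∀ k, Module.Finite ℚ[X] (B.homology k))
    (hsep : ∀ k, ∃ c : ℚ[X], (∀ v : A.homology (k + 1), c • v = 0) ∧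
      ∀ v : B.homology k, c • v = v)
    (u : A ⟶ B) :
    ∃ (a : DerivedCategory.Q.obj A ≅ DerivedCategory.Q.obj (cohomologyComplex A))
      (b : DerivedCategory.Q.obj B ≅ DerivedCategory.Q.obj (cohomologyComplex B)),
      DerivedCategory.Q.map u ≫ b.hom =
        a.hom ≫ DerivedCategory.Q.map (cohomologyComplexMap u) := by
  let RA (k : ℤ) : ShortResolution (A.homology k) := (nonempty_shortResolution _).some
  let RB (k : ℤ) : ShortResolution (B.homology k) := (nonempty_shortResolution _).some
  obtain ⟨pA, hpA⟩ := ShortResolution.exists_hom RA A (fun k => 𝟙 _)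
  obtain ⟨qA, hqA⟩ := ShortResolution.exists_hom RA (cohomologyComplex A)
    (fun k => (cohomologyComplexIso A k).hom)
  obtain ⟨pB, hpB⟩ := ShortResolution.exists_hom RB B (fun k => 𝟙 _)
  obtain ⟨qB, hqB⟩ := ShortResolution.exists_hom RB (cohomologyComplex B)
    (fun k => (cohomologyComplexIso B k).hom)
  obtain ⟨φ, hφ⟩ := ShortResolution.exists_hom RA (ShortResolution.total RB)
    (fun k => HomologicalComplex.homologyMap u k ≫ (ShortResolution.homologyIso RB k).inv)
  have hqi {K L : CochainComplex (ModuleCat.{v} (Polynomial ℚ)) ℤ} (f : K ⟶ L)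
      (h : ∀ k, IsIso (HomologicalComplex.homologyMap f k)) : IsIso (DerivedCategory.Q.map f) := by
    rw [DerivedCategory.isIso_Q_map_iff_quasiIso, quasiIso_iff]
    exact fun k => (quasiIsoAt_iff_isIso_homologyMap f k).2 (h k)
  have := hqi pA fun k => by rw [hpA]; infer_instance
  have := hqi qA fun k => by rw [hqA]; infer_instance
  have := hqi pB fun k => by rw [hpB]; infer_instance
  have := hqi qB fun k => by rw [hqB]; infer_instance
  have hext (k : ℤ) (g : (RA (k + 1)).K ⟶ B.homology k) : ∃ h, (RA (k + 1)).i ≫ h = g := by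
    obtain ⟨c, hc₁, hc₂⟩ := hsep k
    refine (RA (k + 1)).exists_extension c ?_ ?_ g
    · ext v
      exact hc₁ v
    · ext v
      exact hc₂ v
  obtain ⟨h₁⟩ := ShortResolution.homotopy RA B hext (pA ≫ u) (φ ≫ pB) (fun k => by
    simp [HomologicalComplex.homologyMap_comp, hpA, hpB, hφ])
  obtain ⟨h₂⟩ := ShortResolution.homotopy RA (cohomologyComplex B)
    (fun k g => by
      obtain ⟨h, hh⟩ := hext k (g ≫ (cohomologyComplexIso B k).inv)
      exact ⟨h ≫ (cohomologyComplexIso B k).hom, by simp [reassoc_of% hh]⟩)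
    (qA ≫ cohomologyComplexMap u) (φ ≫ qB) (fun k => by
      simp [HomologicalComplex.homologyMap_comp, hqA, hqB, hφ, cohomologyComplexIso_naturality])
  have e₁ := DerivedCategory.Q_map_eq_of_homotopy _ h₁
  have e₂ := DerivedCategory.Q_map_eq_of_homotopy _ h₂
  rw [Functor.map_comp, Functor.map_comp] at e₁ e₂
  refine ⟨(asIso (DerivedCategory.Q.map pA)).symm ≪≫ asIso (DerivedCategory.Q.map qA),
    (asIso (DerivedCategory.Q.map pB)).symm ≪≫ asIso (DerivedCategory.Q.map qB), ?_⟩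
  rw [← cancel_epi (DerivedCategory.Q.map pA)]
  simp [reassoc_of% e₁, e₂]

/-- **Purity implies formality over `ℚ[X]`, naturally in one morphism.**
Given a chain map `u : A ⟶ B` between complexes of `ℚ[X]`-modules whose
cohomologies are pure (finite dimensional of weight `α·k` in degree `k` when `α·k`
is an integer, zero otherwise), there are isomorphisms `a : A ≅ H(A)` and
`b : B ≅ H(B)` in the derived category intertwining `u` and `H(u)`. -/
theorem stmt_5 [HasDerivedCategory (ModuleCat (Polynomial ℚ))]
    (ξ : ℚ) (hξ0 : ξ ≠ 0) (hξ1 : ξ ≠ 1) (hξm1 : ξ ≠ -1)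
    (α : ℚ) (hα : α ≠ 0)
    (A B : CochainComplex (ModuleCat (Polynomial ℚ)) ℤ)
    (hpureA : ∀ (k w : ℤ), (w : ℚ) = α * k →
      Module.Finite ℚ (RestrictScalars ℚ (Polynomial ℚ) (A.homology k)) ∧
      ∃ N : ℕ, ∀ v : A.homology k,
        ((X - C (ξ ^ w)) ^ N : Polynomial ℚ) • v = 0)
    (hpureB : ∀ (k w : ℤ), (w : ℚ) = α * k →
      Module.Finite ℚ (RestrictScalars ℚ (Polynomial ℚ) (B.homology k)) ∧
      ∃ N : ℕ, ∀ v : B.homology k,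
        ((X - C (ξ ^ w)) ^ N : Polynomial ℚ) • v = 0)
    (hzeroA : ∀ k : ℤ, (¬ ∃ w : ℤ, (w : ℚ) = α * k) →
      Subsingleton (A.homology k))
    (hzeroB : ∀ k : ℤ, (¬ ∃ w : ℤ, (w : ℚ) = α * k) →
      Subsingleton (B.homology k))
    (u : A ⟶ B) :
    ∃ (a : DerivedCategory.Q.obj A ≅ DerivedCategory.Q.obj (cohomologyComplex A))
      (b : DerivedCategory.Q.obj B ≅ DerivedCategory.Q.obj (cohomologyComplex B)),
      DerivedCategory.Q.map u ≫ b.hom =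
        a.hom ≫ DerivedCategory.Q.map (cohomologyComplexMap u) := by
  have hfin (K : CochainComplex (ModuleCat (Polynomial ℚ)) ℤ)
      (h : ∀ (k w : ℤ), (w : ℚ) = α * k →
        Module.Finite ℚ (RestrictScalars ℚ (Polynomial ℚ) (K.homology k)) ∧
        ∃ N : ℕ, ∀ v : K.homology k, ((X - C (ξ ^ w)) ^ N : Polynomial ℚ) • v = 0)
      (h0 : ∀ k : ℤ, (¬ ∃ w : ℤ, (w : ℚ) = α * k) → Subsingleton (K.homology k)) (k : ℤ) :
      Module.Finite ℚ[X] (K.homology k) := by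
    by_cases hk : ∃ w : ℤ, (w : ℚ) = α * k
    · obtain ⟨w, hw⟩ := hk
      have := (h k w hw).1
      let _ : Module ℚ[X] (RestrictScalars ℚ ℚ[X] (K.homology k)) :=
        RestrictScalars.moduleOrig ℚ ℚ[X] (K.homology k)
      exact Module.Finite.of_restrictScalars_finite ℚ ℚ[X]
        (RestrictScalars ℚ ℚ[X] (K.homology k))
    · have := h0 k hk
      infer_instance
  refine formality_square A B (hfin A hpureA hzeroA) (hfin B hpureB hzeroB) (fun k => ?_) u
  by_cases hA : ∃ w : ℤ, (w : ℚ) = α * ((k + 1 : ℤ) : ℚ)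
  · by_cases hB : ∃ w : ℤ, (w : ℚ) = α * k
    · obtain ⟨w', hw'⟩ := hA
      obtain ⟨w, hw⟩ := hB
      obtain ⟨m, hm⟩ := (hpureA _ _ hw').2
      obtain ⟨n, hn⟩ := (hpureB _ _ hw).2
      exact exists_separating (zpow_ne_zpow hξ0 hξ1 hξm1 hα hw hw') hm hn
    · have := hzeroB k hB
      exact ⟨0, fun v => zero_smul _ v, fun v => Subsingleton.elim _ _⟩
  · have := hzeroA _ hA
    exact ⟨1, fun v => Subsingleton.elim _ _, fun v => one_smul _ v⟩
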